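/- Let K be a finite field of characteristic p and order q with [K : F_p] having 2-adic valuation s (i.e., 2^s exactly divides [K : F_p]), and let d be an integer with gcd(d, q − 1) = 1. If {W_{K,d}(a) : a ∈ K^×} = {0, A, −A} for some nonzero complex number A, then |A|^2 ≥ p^(2^s) · q. -/

import Mathlib

open scoped BigOperators Classical

/-- The canonical additive character of a finite field `K` of characteristic `p`:
`ψ_K(x) = exp(2πi · Tr_{K/F_p}(x) / p)`, where `Tr_{K/F_p}` is the absolute trace. -/
noncomputable def canonicalAddChar (p : ℕ) [Fact p.Prime] (K : Type) [Field K] [Fintype K]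
    [Algebra (ZMod p) K] (x : K) : ℂ :=
  Complex.exp (2 * Real.pi * Complex.I * ((Algebra.trace (ZMod p) K x).val : ℂ) / (p : ℂ))

/-- The Weil sum `W_{K,d}(a) = ∑_{x ∈ K} ψ_K(x^d + a·x)`. -/
noncomputable def weilSum (p : ℕ) [Fact p.Prime] (K : Type) [Field K] [Fintype K]
    [Algebra (ZMod p) K] (d : ℤ) (a : K) : ℂ :=
  ∑ x : K, canonicalAddChar p K (x ^ d + a * x)

/-- The value set `{W_{K,d}(a) : a ∈ K^×}` of the Weil sum. -/
noncomputable def weilValues (p : ℕ) [Fact p.Prime] (K : Type) [Field K] [Fintype K]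
    [Algebra (ZMod p) K] (d : ℤ) : Set ℂ :=
  {w : ℂ | ∃ a : K, a ≠ 0 ∧ weilSum p K d a = w}

/-- `d` is degenerate over a finite field of order `q` and characteristic `p` if
`d ≡ p^j (mod q − 1)` for some nonnegative integer `j`. -/
def IsDegenerate (p : ℕ) (q : ℕ) (d : ℤ) : Prop :=
  ∃ j : ℕ, d ≡ (p : ℤ) ^ j [ZMOD (q : ℤ) - 1]

/-!
If the Weil sums of `K` take only the values `0` and `±A`, comparing their first and third moments
gives `A ^ 2 = q * V`, where `V` counts the solutions of `(u + 1) ^ d = u ^ d + 1` in `K`. So it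
suffices that `x ↦ x ^ d` is additive on the subfield of order `p ^ (2 ^ s)`.

The number `A` is a rational integer dividing `q` and every Weil sum of `K`, and `A ^ 2 > q`. The
Mellin transform of a Weil sum is a product of two Gauss sums, so by the Hasse–Davenport lifting
relation the transforms over `K` at lifted characters are powers of those over a subfield `E`, and
inverting the transform over `E` makes `|A|` divide the powers `W_E(a) ^ [K : E]`. If `x ↦ x ^ d` is
an automorphism of a subfield `F` with `[E : F] = 2`, Niho's argument expresses `W_E(a)` by a number
of zeros and yields that it is an integer with `W_E(a) ≥ -|F|`; since `|F| ^ [K : E] = √q < |A|`,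
the divisibility forces `W_E(a) ≥ 0`. Nonnegative integers with sum `|E|` and sum of squares
`|E| ^ 2` include one that is at least `|E|`, and a Weil sum this large has all its terms equal to
`1`; by independence of characters `x ↦ x ^ d` is then an automorphism of `E`. The conclusion climbs
the tower of quadratic extensions from the prime field, where Galois conjugation of the integers
`W_K(a)` starts it.
-/

section PowerPermutation

variable {K : Type*} [Field K] {d : ℤ}

theorem ne_zero_of_zpow_injective (hd : Function.Injective fun x : K => x ^ d) : d ≠ 0 := by
  rintro rfl
  exact zero_ne_one (hd (by simp only [zpow_zero]))

theorem neg_zpow_of_zpow_injective (hd : Function.Injective fun x : K => x ^ d) (x : K) :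
    (-x) ^ d = -x ^ d := by
  rcases Int.even_or_odd d with heven | hodd
  · have hneg : (-1 : K) = 1 := hd (by simp only [heven.neg_zpow])
    rw [heven.neg_zpow, neg_eq_neg_one_mul, hneg, one_mul]
  · exact hodd.neg_zpow x

theorem zpow_injective_of_algebra {L : Type*} [Field L] [Algebra K L]
    (hd : Function.Injective fun x : L => x ^ d) : Function.Injective fun x : K => x ^ d :=
  fun x y hxy => (algebraMap K L).injective <| hd <| by
    simpa only [map_zpow₀] using congrArg (algebraMap K L) hxy

theorem zpow_injective_of_gcd_eq_one [Fintype K] (hd0 : d ≠ 0)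
    (hd : Int.gcd d ((Fintype.card K : ℤ) - 1) = 1) : Function.Injective fun x : K => x ^ d := by
  intro x y (hxy : x ^ d = y ^ d)
  rcases eq_or_ne y 0 with rfl | hy
  · exact eq_zero_of_zpow_eq_zero (hxy.trans (zero_zpow d hd0))
  have hx : x ≠ 0 := by
    rintro rfl
    exact zpow_ne_zero d hy (hxy.symm.trans (zero_zpow d hd0))
  have hz : x / y ≠ 0 := div_ne_zero hx hy
  have hpow : (x / y) ^ d = 1 := by rw [div_zpow, hxy, div_self (zpow_ne_zero d hy)]
  have hcard : (x / y) ^ ((Fintype.card K : ℤ) - 1) = 1 := by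
    rw [← Nat.cast_pred Fintype.card_pos, zpow_natCast]
    exact FiniteField.pow_card_sub_one_eq_one _ hz
  have hbezout := Int.gcd_eq_gcd_ab d ((Fintype.card K : ℤ) - 1)
  rw [hd, Nat.cast_one] at hbezout
  rw [← div_eq_one_iff_eq hy, ← zpow_one (x / y), hbezout, zpow_add₀ hz, zpow_mul, zpow_mul, hpow,
    hcard, one_zpow, one_zpow, one_mul]

end PowerPermutation

section BinomialSum

variable {K R : Type*} [Field K] [Fintype K] [CommRing R]

/-- The Weil sum `∑ x, ψ (x ^ d + a * x)` of a binomial, for an arbitrary additive character `ψ` in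
place of the canonical one. -/
def binomialSum (ψ : AddChar K R) (d : ℤ) (a : K) : R :=
  ∑ x : K, ψ (x ^ d + a * x)

variable [IsDomain R] {ψ : AddChar K R} {d : ℤ}

theorem sum_addChar_mul (hψ : ψ ≠ 1) (b : K) :
    ∑ a : K, ψ (a * b) = if b = 0 then (Fintype.card K : R) else 0 := by
  rw [AddChar.sum_mulShift b (AddChar.IsPrimitive.of_ne_one hψ), Nat.cast_ite, Nat.cast_zero]

theorem sum_addChar_zpow_mul (hψ : ψ ≠ 1) (hd : Function.Injective fun x : K => x ^ d) (b : K) :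
    ∑ x : K, ψ (x ^ d * b) = if b = 0 then (Fintype.card K : R) else 0 := by
  rw [← sum_addChar_mul hψ b]
  exact Fintype.sum_bijective _ (Finite.injective_iff_bijective.1 hd) _ _ fun x => rfl

theorem binomialSum_zero (hψ : ψ ≠ 1) (hd : Function.Injective fun x : K => x ^ d) :
    binomialSum ψ d 0 = 0 := by
  simpa [binomialSum] using sum_addChar_zpow_mul hψ hd 1

theorem binomialSum_exponent_zero (hψ : ψ ≠ 1) {a : K} (ha : a ≠ 0) : binomialSum ψ 0 a = 0 := by
  simp only [binomialSum, zpow_zero, AddChar.map_add_eq_mul, ← Finset.mul_sum, mul_comm a,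
    sum_addChar_mul hψ, if_neg ha, mul_zero]

theorem sum_binomialSum (hψ : ψ ≠ 1) (hd0 : d ≠ 0) :
    ∑ a : K, binomialSum ψ d a = Fintype.card K := by
  simp_rw [binomialSum, AddChar.map_add_eq_mul]
  rw [Finset.sum_comm]
  simp [← Finset.mul_sum, sum_addChar_mul hψ, zero_zpow d hd0]

theorem sum_binomialSum_mulShift_mul_binomialSum (hψ : ψ ≠ 1)
    (hd : Function.Injective fun x : K => x ^ d) (j : K) :
    ∑ a : K, binomialSum (ψ.mulShift j) d a * binomialSum ψ d a =
      if j ^ d = j then (Fintype.card K : R) ^ 2 else 0 := by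
  have hinner (x y : K) : ∑ a : K, ψ (j * (x ^ d + a * x)) * ψ (y ^ d + a * y) =
      if y = -(j * x) then (Fintype.card K : R) * ψ (x ^ d * (j - j ^ d)) else 0 := by
    have hsplit (a : K) : ψ (j * (x ^ d + a * x)) * ψ (y ^ d + a * y) =
        ψ (j * x ^ d + y ^ d) * ψ (a * (y + j * x)) := by
      simp only [← AddChar.map_add_eq_mul]
      ring_nf
    simp only [hsplit, ← Finset.mul_sum, sum_addChar_mul hψ, ← eq_neg_iff_add_eq_zero]
    split_ifs with hy
    · rw [hy, neg_zpow_of_zpow_injective hd, mul_zpow, mul_comm]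
      ring_nf
    · rw [mul_zero]
  calc
    _ = ∑ x : K, ∑ y : K, ∑ a : K, ψ (j * (x ^ d + a * x)) * ψ (y ^ d + a * y) := by
      simp only [binomialSum, AddChar.mulShift_apply, Finset.sum_mul_sum]
      rw [Finset.sum_comm]
      exact Finset.sum_congr rfl fun x _ => Finset.sum_comm
    _ = Fintype.card K * ∑ x : K, ψ (x ^ d * (j - j ^ d)) := by
      simp only [hinner, Finset.sum_ite_eq', Finset.mem_univ, if_true, Finset.mul_sum]
    _ = _ := by
      simp only [sum_addChar_zpow_mul hψ hd, sub_eq_zero, eq_comm (a := j), mul_ite, mul_zero, sq]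

theorem sum_binomialSum_sq (hψ : ψ ≠ 1) (hd : Function.Injective fun x : K => x ^ d) :
    ∑ a : K, binomialSum ψ d a ^ 2 = (Fintype.card K : R) ^ 2 := by
  simpa [sq] using sum_binomialSum_mulShift_mul_binomialSum hψ hd 1

theorem sum_binomialSum_pow_three (hψ : ψ ≠ 1) (hd : Function.Injective fun x : K => x ^ d) :
    ∑ a : K, binomialSum ψ d a ^ 3 =
      Fintype.card K * ∑ x : K, ∑ y : K, ψ (x ^ d + y ^ d - (x + y) ^ d) := by
  have hinner (x y z : K) : ∑ a : K, ψ (z ^ d + a * z) * ψ (y ^ d + a * y) * ψ (x ^ d + a * x) =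
      if z = -(x + y) then (Fintype.card K : R) * ψ (x ^ d + y ^ d - (x + y) ^ d) else 0 := by
    have hsplit (a : K) : ψ (z ^ d + a * z) * ψ (y ^ d + a * y) * ψ (x ^ d + a * x) =
        ψ (x ^ d + y ^ d + z ^ d) * ψ (a * (z + (x + y))) := by
      simp only [← AddChar.map_add_eq_mul]
      ring_nf
    simp only [hsplit, ← Finset.mul_sum, sum_addChar_mul hψ, ← eq_neg_iff_add_eq_zero]
    split_ifs with hz
    · rw [hz, neg_zpow_of_zpow_injective hd, mul_comm, sub_eq_add_neg]
    · rw [mul_zero]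
  calc
    _ = ∑ a : K, ∑ x : K, ∑ y : K, ∑ z : K,
        ψ (z ^ d + a * z) * ψ (y ^ d + a * y) * ψ (x ^ d + a * x) := by
      simp only [binomialSum, pow_succ, pow_zero, one_mul, Finset.sum_mul, Finset.mul_sum]
    _ = ∑ x : K, ∑ y : K, ∑ z : K, ∑ a : K,
        ψ (z ^ d + a * z) * ψ (y ^ d + a * y) * ψ (x ^ d + a * x) := by
      rw [Finset.sum_comm]
      refine Finset.sum_congr rfl fun x _ => ?_
      rw [Finset.sum_comm]
      exact Finset.sum_congr rfl fun y _ => Finset.sum_comm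
    _ = _ := by
      simp only [hinner, Finset.sum_ite_eq', Finset.mem_univ, if_true, Finset.mul_sum]

theorem sum_sum_addChar_zpow_add_sub (hψ : ψ ≠ 1) (hd : Function.Injective fun x : K => x ^ d) :
    ∑ x : K, ∑ y : K, ψ (x ^ d + y ^ d - (x + y) ^ d) =
      Fintype.card K * Finset.card {u : K | (u + 1) ^ d = u ^ d + 1} := by
  have hd0 := ne_zero_of_zpow_injective hd
  have hscale (x : K) : ∑ y : K, ψ (x ^ d + y ^ d - (x + y) ^ d) =
      ∑ u : K, ψ (x ^ d * (u ^ d + 1 - (u + 1) ^ d)) := by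
    rcases eq_or_ne x 0 with rfl | hx
    · simp [zero_zpow d hd0]
    · refine (Fintype.sum_bijective _ (mulLeft_bijective₀ x hx) _ _ fun u => ?_).symm
      rw [← mul_one_add x u, mul_zpow, mul_zpow]
      ring_nf
  simp_rw [hscale]
  rw [Finset.sum_comm]
  simp only [sum_addChar_zpow_mul hψ hd, sub_eq_zero, eq_comm (b := (_ + 1 : K) ^ d)]
  rw [← Finset.sum_filter, Finset.sum_const, nsmul_eq_mul, mul_comm]

end BinomialSum

section MonicPolynomials

open Polynomial UniqueFactorizationMonoid

variable {F : Type*} [Field F]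

theorem card_filter_pow_dvd_eq_count {N : ℕ} {P f : F[X]} (hP : P.Monic) (hPi : Irreducible P)
    (hf : f ≠ 0) (hN : f.natDegree ≤ N) :
    Finset.card {j ∈ Finset.Icc 1 N | P ^ j ∣ f} = (normalizedFactors f).count P := by
  have hiff (j : ℕ) : P ^ j ∣ f ↔ j ≤ (normalizedFactors f).count P := by
    rw [pow_dvd_iff_le_emultiplicity, emultiplicity_eq_count_normalizedFactors hPi hf,
      hP.normalize_eq_self, Nat.cast_le]
  have hle : (normalizedFactors f).count P ≤ N := by
    have hdegree := natDegree_le_of_dvd ((hiff _).2 le_rfl) hf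
    rw [natDegree_pow] at hdegree
    exact (Nat.le_mul_of_pos_right _ hPi.natDegree_pos).trans (hdegree.trans hN)
  have hIcc : {j ∈ Finset.Icc 1 N | P ^ j ∣ f} =
      Finset.Icc 1 ((normalizedFactors f).count P) := by
    ext j
    simp only [hiff, Finset.mem_filter, Finset.mem_Icc]
    lia
  rw [hIcc, Nat.card_Icc, Nat.add_sub_cancel]

variable [Finite F]

theorem finite_setOf_monic_natDegree_le (N : ℕ) :
    {f : F[X] | f.Monic ∧ f.natDegree ≤ N}.Finite := by
  have : Finite (degreeLT F (N + 1)) :=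
    Finite.of_equiv _ (degreeLTEquiv F (N + 1)).symm.toEquiv
  refine (Set.toFinite (degreeLT F (N + 1) : Set F[X])).subset fun f hf => ?_
  exact mem_degreeLT.2 (degree_le_natDegree.trans_lt (mod_cast Nat.lt_succ_of_le hf.2))

variable (F) in
/-- The monic polynomials of degree `k` over a finite field. -/
noncomputable def monicsOfNatDegree (k : ℕ) : Finset F[X] :=
  ((finite_setOf_monic_natDegree_le k).subset
    (show {f : F[X] | f.Monic ∧ f.natDegree = k} ⊆ _ from fun _ h => ⟨h.1, h.2.le⟩)).toFinset

theorem mem_monicsOfNatDegree {k : ℕ} {f : F[X]} :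
    f ∈ monicsOfNatDegree F k ↔ f.Monic ∧ f.natDegree = k := by
  simp [monicsOfNatDegree]

variable (F) in
/-- The monic irreducible polynomials of degree at most `N` over a finite field: the primes that
can divide a polynomial of degree `N`. -/
noncomputable def monicIrreducibles (N : ℕ) : Finset F[X] :=
  ((finite_setOf_monic_natDegree_le N).subset
    (show {f : F[X] | f.Monic ∧ Irreducible f ∧ f.natDegree ≤ N} ⊆ _ from
      fun _ h => ⟨h.1, h.2.2⟩)).toFinset

theorem mem_monicIrreducibles {N : ℕ} {f : F[X]} :
    f ∈ monicIrreducibles F N ↔ f.Monic ∧ Irreducible f ∧ f.natDegree ≤ N := by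
  simp [monicIrreducibles]

theorem monicsOfNatDegree_zero : monicsOfNatDegree F 0 = {1} := by
  ext f
  rw [mem_monicsOfNatDegree, Finset.mem_singleton]
  refine ⟨fun h => h.1.natDegree_eq_zero.1 h.2, ?_⟩
  rintro rfl
  exact ⟨monic_one, natDegree_one⟩

theorem X_sub_C_bijOn_monicsOfNatDegree_one :
    Set.BijOn (fun a : F => X - C a) Set.univ (monicsOfNatDegree F 1) := by
  refine ⟨fun a _ => mem_monicsOfNatDegree.2 ⟨monic_X_sub_C a, natDegree_X_sub_C a⟩,
    fun a _ b _ hab => by simpa using hab, fun f hf => ⟨-f.coeff 0, Set.mem_univ _, ?_⟩⟩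
  obtain ⟨hmonic, hdegree⟩ := mem_monicsOfNatDegree.1 hf
  simpa only [C_neg, sub_neg_eq_add] using (hmonic.eq_X_add_C hdegree).symm

theorem add_C_mul_X_pow_mem_monicsOfNatDegree {k : ℕ} {f : F[X]}
    (hf : f ∈ monicsOfNatDegree F (k + 1)) (c : F) :
    f + C c * X ^ k ∈ monicsOfNatDegree F (k + 1) := by
  obtain ⟨hmonic, hdegree⟩ := mem_monicsOfNatDegree.1 hf
  have hlt : (C c * X ^ k).degree < f.degree := by
    rw [degree_eq_natDegree hmonic.ne_zero, hdegree]
    exact (degree_C_mul_X_pow_le k c).trans_lt (mod_cast k.lt_succ_self)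
  exact mem_monicsOfNatDegree.2
    ⟨hmonic.add_of_left hlt, (natDegree_add_eq_left_of_degree_lt hlt).trans hdegree⟩

theorem natDegree_eq_sum_card_pow_dvd {N : ℕ} {f : F[X]} (hf : f.Monic) (hN : f.natDegree ≤ N) :
    f.natDegree = ∑ P ∈ monicIrreducibles F N,
      Finset.card {j ∈ Finset.Icc 1 N | P ^ j ∣ f} * P.natDegree := by
  have hmem (P) (hP : P ∈ normalizedFactors f) : P ∈ monicIrreducibles F N := by
    have hirr := irreducible_of_normalized_factor P hP
    refine mem_monicIrreducibles.2 ⟨?_, hirr,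
      (natDegree_le_of_dvd (dvd_of_mem_normalizedFactors hP) hf.ne_zero).trans hN⟩
    exact normalize_normalized_factor P hP ▸ monic_normalize hirr.ne_zero
  calc
    f.natDegree = (normalizedFactors f).prod.natDegree := by
      rw [prod_normalizedFactors_eq hf.ne_zero, hf.normalize_eq_self]
    _ = ((normalizedFactors f).map natDegree).sum :=
      natDegree_multiset_prod_of_monic _ fun P hP => (mem_monicIrreducibles.1 (hmem P hP)).1
    _ = ∑ P ∈ monicIrreducibles F N, (normalizedFactors f).count P * P.natDegree := by
      rw [Finset.sum_multiset_map_count]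
      refine Finset.sum_subset (fun P hP => hmem P (Multiset.mem_toFinset.1 hP)) fun P _ hP => ?_
      rw [Multiset.count_eq_zero_of_notMem (mt Multiset.mem_toFinset.2 hP), zero_smul]
    _ = _ := by
      refine Finset.sum_congr rfl fun P hP => ?_
      obtain ⟨hmonic, hirr, -⟩ := mem_monicIrreducibles.1 hP
      rw [card_filter_pow_dvd_eq_count hmonic hirr hf.ne_zero hN]

theorem card_filter_minpoly_eq {K : Type*} [Field K] [Fintype K] [Algebra F K] {P : F[X]}
    (hP : P.Monic) (hPi : Irreducible P) (hdvd : P.natDegree ∣ Module.finrank F K) :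
    Finset.card {x : K | minpoly F x = P} = P.natDegree := by
  have := Fintype.ofFinite F
  have hdvd' := hPi.natDegree_dvd_iff_dvd_X_pow_card_pow_sub_X.1 hdvd
  rw [Nat.card_eq_fintype_card, ← Module.card_eq_pow_finrank (K := F) (V := K)] at hdvd'
  have hsplits : (P.map (algebraMap F K)).Splits := by
    refine Splits.of_dvd (FiniteField.isSplittingField_sub K F).splits ?_
      (Polynomial.map_dvd (algebraMap F K) hdvd')
    exact (Polynomial.map_ne_zero_iff (algebraMap F K).injective).2
      (FiniteField.X_pow_card_sub_X_ne_zero F Fintype.one_lt_card)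
  rw [← card_rootSet_eq_natDegree (PerfectField.separable_of_irreducible hPi) hsplits,
    Fintype.card_subtype]
  congr! 2 with x
  rw [mem_rootSet]
  refine ⟨?_, fun h => (minpoly.eq_of_irreducible_of_monic hPi h.2 hP).symm⟩
  rintro rfl
  exact ⟨hPi.ne_zero, minpoly.aeval F x⟩

end MonicPolynomials

section HasseDavenport

open Polynomial

variable {F R : Type*} [Field F] [CommRing R]

/-- The completely multiplicative weight
`X ^ k - s * X ^ (k - 1) + ⋯ + (-1) ^ k * n ↦ χ n * ψ s` on monic polynomials, so that the minimal
polynomial of `x` has weight `χ (N x) * ψ (Tr x)`. Its `L`-function is `1 + gaussSum χ ψ * T`. -/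
def charWeight (χ : MulChar F R) (ψ : AddChar F R) (f : F[X]) : R :=
  χ ((-1) ^ f.natDegree * f.coeff 0) * ψ (-f.nextCoeff)

variable (χ : MulChar F R) {ψ : AddChar F R}

theorem charWeight_one : charWeight χ ψ 1 = 1 := by
  simp [charWeight, nextCoeff]

theorem charWeight_X_sub_C (a : F) : charWeight χ ψ (X - C a) = χ a * ψ a := by
  simp [charWeight, nextCoeff_X_sub_C]

theorem charWeight_mul {f g : F[X]} (hf : f.Monic) (hg : g.Monic) :
    charWeight χ ψ (f * g) = charWeight χ ψ f * charWeight χ ψ g := by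
  have hnorm : (-1 : F) ^ (f.natDegree + g.natDegree) * (f.coeff 0 * g.coeff 0) =
      (-1) ^ f.natDegree * f.coeff 0 * ((-1) ^ g.natDegree * g.coeff 0) := by ring
  rw [charWeight, hf.natDegree_mul hg, mul_coeff_zero, hf.nextCoeff_mul hg, neg_add,
    AddChar.map_add_eq_mul, hnorm, map_mul, mul_mul_mul_comm, charWeight, charWeight]

theorem charWeight_pow {f : F[X]} (hf : f.Monic) (j : ℕ) :
    charWeight χ ψ (f ^ j) = charWeight χ ψ f ^ j := by
  induction j with
  | zero => rw [pow_zero, pow_zero, charWeight_one]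
  | succ j ih => rw [pow_succ, charWeight_mul χ (hf.pow j) hf, ih, pow_succ]

theorem charWeight_add_C_mul_X_pow [Finite F] {k : ℕ} {f : F[X]}
    (hf : f ∈ monicsOfNatDegree F (k + 2)) (c : F) :
    charWeight χ ψ (f + C c * X ^ (k + 1)) = ψ (-c) * charWeight χ ψ f := by
  have hdegree := (mem_monicsOfNatDegree.1 (add_C_mul_X_pow_mem_monicsOfNatDegree hf c)).2
  have hdegree' := (mem_monicsOfNatDegree.1 hf).2
  rw [charWeight, charWeight, nextCoeff_of_natDegree_pos (by lia),
    nextCoeff_of_natDegree_pos (by lia), hdegree, hdegree', mul_left_comm,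
    ← AddChar.map_add_eq_mul]
  simp

theorem charWeight_minpoly_pow {K : Type*} [Field K] [Algebra F K] [FiniteDimensional F K]
    (x : K) :
    charWeight χ ψ (minpoly F x) ^ (Module.finrank F K / (minpoly F x).natDegree) =
      χ (Algebra.norm F x) * ψ (Algebra.trace F K x) := by
  have hint : IsIntegral F x := Algebra.IsIntegral.isIntegral x
  have hnorm : Algebra.norm F (IntermediateField.AdjoinSimple.gen F x) =
      (-1) ^ (minpoly F x).natDegree * (minpoly F x).coeff 0 := by
    have := Algebra.PowerBasis.norm_gen_eq_coeff_zero_minpoly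
      (IntermediateField.adjoin.powerBasis hint)
    rwa [IntermediateField.adjoin.powerBasis_gen, IntermediateField.minpoly_gen,
      IntermediateField.adjoin.powerBasis_dim] at this
  have hdiv : Module.finrank F K / (minpoly F x).natDegree =
      Module.finrank (IntermediateField.adjoin F {x}) K := by
    rw [← Module.finrank_mul_finrank F (IntermediateField.adjoin F {x}) K,
      IntermediateField.adjoin.finrank hint, Nat.mul_div_cancel_left _ (minpoly.natDegree_pos hint)]
  rw [hdiv, Algebra.norm_eq_norm_adjoin, trace_eq_finrank_mul_minpoly_nextCoeff, hnorm, charWeight,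
    map_pow, ← nsmul_eq_mul, AddChar.map_nsmul_eq_pow, mul_pow]

theorem sum_charWeight_zero [Finite F] : ∑ f ∈ monicsOfNatDegree F 0, charWeight χ ψ f = 1 := by
  rw [monicsOfNatDegree_zero, Finset.sum_singleton, charWeight_one]

theorem sum_charWeight_one [Fintype F] :
    ∑ f ∈ monicsOfNatDegree F 1, charWeight χ ψ f = gaussSum χ ψ := by
  obtain ⟨hmaps, hinj, hsurj⟩ := X_sub_C_bijOn_monicsOfNatDegree_one (F := F)
  exact (Finset.sum_bij (fun a _ => X - C a) (fun a _ => hmaps (Set.mem_univ a))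
    (fun a _ b _ => hinj.eq_iff (Set.mem_univ a) (Set.mem_univ b) |>.1)
    (fun f hf => by simpa using hsurj hf) fun a _ => (charWeight_X_sub_C χ a).symm).symm

theorem sum_charWeight_add_two [Finite F] [IsDomain R] (hψ : ψ ≠ 1) (k : ℕ) :
    ∑ f ∈ monicsOfNatDegree F (k + 2), charWeight χ ψ f = 0 := by
  obtain ⟨b, hb⟩ := AddChar.ne_one_iff.1 hψ
  have htranslate : ψ b * ∑ f ∈ monicsOfNatDegree F (k + 2), charWeight χ ψ f =
      ∑ f ∈ monicsOfNatDegree F (k + 2), charWeight χ ψ f := by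
    rw [Finset.mul_sum]
    refine Finset.sum_bij' (fun f _ => f + C (-b) * X ^ (k + 1)) (fun f _ => f + C b * X ^ (k + 1))
      (fun f hf => add_C_mul_X_pow_mem_monicsOfNatDegree hf _)
      (fun f hf => add_C_mul_X_pow_mem_monicsOfNatDegree hf _) (fun f _ => by simp)
      (fun f _ => by simp) fun f hf => ?_
    rw [charWeight_add_C_mul_X_pow χ hf, neg_neg]
  exact (mul_left_eq_self₀.1 htranslate).resolve_left hb

theorem sum_charWeight_of_pow_dvd [Finite F] {P : F[X]} (hP : P.Monic) (j k : ℕ) :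
    ∑ f ∈ monicsOfNatDegree F k with P ^ j ∣ f, charWeight χ ψ f =
      if j * P.natDegree ≤ k then charWeight χ ψ P ^ j *
        ∑ f ∈ monicsOfNatDegree F (k - j * P.natDegree), charWeight χ ψ f else 0 := by
  have hPj := hP.pow j
  have hdegree : (P ^ j).natDegree = j * P.natDegree := hP.natDegree_pow j
  split_ifs with hle
  · rw [Finset.mul_sum]
    refine (Finset.sum_bij (fun g _ => P ^ j * g) (fun g hg => ?_)
      (fun g _ g' _ h => mul_left_cancel₀ hPj.ne_zero h) (fun f hf => ?_) fun g hg => ?_).symm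
    · obtain ⟨hmonic, hg⟩ := mem_monicsOfNatDegree.1 hg
      refine Finset.mem_filter.2 ⟨mem_monicsOfNatDegree.2 ⟨hPj.mul hmonic, ?_⟩, dvd_mul_right _ _⟩
      rw [hPj.natDegree_mul hmonic, hdegree, hg, Nat.add_sub_cancel' hle]
    · obtain ⟨hmem, g, rfl⟩ := Finset.mem_filter.1 hf
      obtain ⟨hmonic, hg⟩ := mem_monicsOfNatDegree.1 hmem
      have hgmonic : g.Monic := hPj.of_mul_monic_left hmonic
      rw [hPj.natDegree_mul hgmonic, hdegree] at hg
      exact ⟨g, mem_monicsOfNatDegree.2 ⟨hgmonic, by lia⟩, rfl⟩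
    · rw [charWeight_mul χ hPj (mem_monicsOfNatDegree.1 hg).1, charWeight_pow χ hP]
  · rw [Finset.filter_false_of_mem, Finset.sum_empty]
    rintro f hf hdvd
    obtain ⟨hmonic, rfl⟩ := mem_monicsOfNatDegree.1 hf
    exact hle (hdegree ▸ natDegree_le_of_dvd hdvd hmonic.ne_zero)

/-- The sum of `Λ f * charWeight χ ψ f` over the monic `f` of degree `k ≤ N`, where the von Mangoldt
function `Λ` is `P.natDegree` on powers of the monic irreducible `P`. Up to sign these are the power
sums attached to the `L`-function of `charWeight χ ψ`. -/
noncomputable def charWeightPowerSum [Finite F] (χ : MulChar F R) (ψ : AddChar F R) (N k : ℕ) : R :=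
  ∑ P ∈ monicIrreducibles F N, ∑ j ∈ Finset.Icc 1 N,
    if j * P.natDegree = k then P.natDegree * charWeight χ ψ P ^ j else 0

theorem charWeightPowerSum_zero [Finite F] (N : ℕ) : charWeightPowerSum χ ψ N 0 = 0 := by
  refine Finset.sum_eq_zero fun P hP => Finset.sum_eq_zero fun j hj => if_neg ?_
  exact Nat.mul_ne_zero (Nat.one_le_iff_ne_zero.1 (Finset.mem_Icc.1 hj).1)
    (mem_monicIrreducibles.1 hP).2.1.natDegree_pos.ne'

theorem natDegree_mul_sum_charWeight [Finite F] {N k : ℕ} (hk : k ≤ N) :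
    k * ∑ f ∈ monicsOfNatDegree F k, charWeight χ ψ f =
      ∑ P ∈ monicIrreducibles F N, ∑ j ∈ Finset.Icc 1 N,
        P.natDegree * ∑ f ∈ monicsOfNatDegree F k with P ^ j ∣ f, charWeight χ ψ f := by
  have hdegree (f) (hf : f ∈ monicsOfNatDegree F k) : (k : R) * charWeight χ ψ f =
      ∑ P ∈ monicIrreducibles F N, ∑ j ∈ Finset.Icc 1 N,
        if P ^ j ∣ f then P.natDegree * charWeight χ ψ f else 0 := by
    obtain ⟨hmonic, rfl⟩ := mem_monicsOfNatDegree.1 hf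
    conv_lhs => rw [natDegree_eq_sum_card_pow_dvd hmonic hk]
    push_cast
    simp only [Finset.sum_mul, ← Finset.sum_filter, Finset.sum_const, nsmul_eq_mul, mul_assoc]
  rw [Finset.mul_sum, Finset.sum_congr rfl hdegree, Finset.sum_comm]
  refine Finset.sum_congr rfl fun P _ => ?_
  rw [Finset.sum_comm]
  refine Finset.sum_congr rfl fun j _ => ?_
  rw [← Finset.sum_filter, Finset.mul_sum]

theorem succ_mul_sum_charWeight [Fintype F] [IsDomain R] (hψ : ψ ≠ 1) {N k : ℕ} (hk : k + 1 ≤ N) :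
    ((k + 1 : ℕ) : R) * ∑ f ∈ monicsOfNatDegree F (k + 1), charWeight χ ψ f =
      charWeightPowerSum χ ψ N (k + 1) + gaussSum χ ψ * charWeightPowerSum χ ψ N k := by
  rw [natDegree_mul_sum_charWeight χ hk, charWeightPowerSum, charWeightPowerSum, Finset.mul_sum,
    ← Finset.sum_add_distrib]
  refine Finset.sum_congr rfl fun P hP => ?_
  rw [Finset.mul_sum, ← Finset.sum_add_distrib]
  refine Finset.sum_congr rfl fun j _ => ?_
  rw [sum_charWeight_of_pow_dvd χ (mem_monicIrreducibles.1 hP).1]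
  obtain hlt | heq | heq | hgt : j * P.natDegree < k ∨ j * P.natDegree = k ∨
      j * P.natDegree = k + 1 ∨ k + 1 < j * P.natDegree := by lia
  · obtain ⟨i, hi⟩ : ∃ i, k + 1 - j * P.natDegree = i + 2 := ⟨k - 1 - j * P.natDegree, by lia⟩
    rw [hi, sum_charWeight_add_two χ hψ, mul_zero, ite_self, if_neg (by lia), if_neg hlt.ne]
    ring
  · rw [heq, if_pos k.le_succ, Nat.add_sub_cancel_left, sum_charWeight_one,
      if_neg k.succ_ne_self.symm, if_pos rfl]
    ring
  · rw [heq, if_pos le_rfl, Nat.sub_self, sum_charWeight_zero, if_pos rfl, if_neg k.succ_ne_self]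
    ring
  · rw [if_neg hgt.not_ge, if_neg hgt.ne', if_neg (by lia)]
    ring

theorem charWeightPowerSum_succ [Fintype F] [IsDomain R] (hψ : ψ ≠ 1) {N k : ℕ} (hk : k + 1 ≤ N) :
    charWeightPowerSum χ ψ N (k + 1) = (-1) ^ k * gaussSum χ ψ ^ (k + 1) := by
  induction k with
  | zero => simpa [sum_charWeight_one, charWeightPowerSum_zero] using
      (succ_mul_sum_charWeight χ hψ hk).symm
  | succ k ih =>
    have hrec := succ_mul_sum_charWeight χ hψ hk
    rw [sum_charWeight_add_two χ hψ, mul_zero, ih (by lia)] at hrec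
    linear_combination -hrec

variable {K : Type*} [Field K] [Fintype K] [Algebra F K]

theorem sum_charWeight_minpoly_pow [Finite F] {P : F[X]} (hP : P.Monic) (hPi : Irreducible P) :
    ∑ x : K with minpoly F x = P,
        charWeight χ ψ (minpoly F x) ^ (Module.finrank F K / (minpoly F x).natDegree) =
      ∑ j ∈ Finset.Icc 1 (Module.finrank F K),
        if j * P.natDegree = Module.finrank F K then P.natDegree * charWeight χ ψ P ^ j else 0 := by
  have hpos := hPi.natDegree_pos
  by_cases hdvd : P.natDegree ∣ Module.finrank F K
  · have hquot : Module.finrank F K / P.natDegree * P.natDegree = Module.finrank F K :=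
      Nat.div_mul_cancel hdvd
    have hquot_mem : Module.finrank F K / P.natDegree ∈ Finset.Icc 1 (Module.finrank F K) :=
      Finset.mem_Icc.2
        ⟨Nat.div_pos (Nat.le_of_dvd Module.finrank_pos hdvd) hpos, Nat.div_le_self _ _⟩
    rw [Finset.sum_congr rfl fun x hx => by rw [(Finset.mem_filter.1 hx).2], Finset.sum_const,
      card_filter_minpoly_eq hP hPi hdvd, Finset.sum_eq_single_of_mem _ hquot_mem, if_pos hquot,
      nsmul_eq_mul]
    intro j _ hj
    exact if_neg fun h => hj (Nat.eq_of_mul_eq_mul_right hpos (h.trans hquot.symm))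
  · rw [Finset.filter_false_of_mem, Finset.sum_empty]
    · exact (Finset.sum_eq_zero fun j _ => if_neg fun h => hdvd ⟨j, by rw [← h, mul_comm]⟩).symm
    · rintro x - rfl
      exact hdvd (minpoly.degree_dvd (Algebra.IsIntegral.isIntegral x))

theorem sum_mulChar_norm_mul_addChar_trace [Fintype F] [IsDomain R] (hψ : ψ ≠ 1) :
    ∑ x : K, χ (Algebra.norm F x) * ψ (Algebra.trace F K x) =
      (-1) ^ (Module.finrank F K - 1) * gaussSum χ ψ ^ Module.finrank F K := by
  have hsucc : Module.finrank F K - 1 + 1 = Module.finrank F K :=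
    Nat.sub_add_cancel Module.finrank_pos
  have hmaps (x : K) (_ : x ∈ Finset.univ) :
      minpoly F x ∈ monicIrreducibles F (Module.finrank F K) := by
    have hint : IsIntegral F x := Algebra.IsIntegral.isIntegral x
    exact mem_monicIrreducibles.2
      ⟨minpoly.monic hint, minpoly.irreducible hint, minpoly.natDegree_le x⟩
  calc
    _ = ∑ P ∈ monicIrreducibles F (Module.finrank F K), ∑ x : K with minpoly F x = P,
        charWeight χ ψ (minpoly F x) ^ (Module.finrank F K / (minpoly F x).natDegree) := by
      rw [Finset.sum_fiberwise_of_maps_to hmaps]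
      simp only [charWeight_minpoly_pow]
    _ = charWeightPowerSum χ ψ (Module.finrank F K) (Module.finrank F K) :=
      Finset.sum_congr rfl fun P hP => sum_charWeight_minpoly_pow χ
        (mem_monicIrreducibles.1 hP).1 (mem_monicIrreducibles.1 hP).2.1
    _ = _ := by
      simpa only [hsucc] using charWeightPowerSum_succ χ hψ hsucc.le

/-- The lift `χ ∘ N_{K/F}` to `K` of a multiplicative character `χ` of `F`. -/
noncomputable def normLift (F K R : Type*) [Field F] [Field K] [Algebra F K] [CommRing R] :
    MulChar F R →* MulChar K R :=
  MulChar.mulEquivToUnitHom.symm.toMonoidHom.comp <|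
    (MonoidHom.compHom' (Units.map (Algebra.norm F))).comp MulChar.mulEquivToUnitHom.toMonoidHom

omit [Fintype K] in
theorem normLift_apply [FiniteDimensional F K] (x : K) :
    normLift F K R χ x = χ (Algebra.norm F x) := by
  rcases eq_or_ne x 0 with rfl | hx
  · rw [Algebra.norm_zero, MulChar.map_zero, MulChar.map_zero]
  · exact MulChar.ofUnitHom_coe _ (Units.mk0 x hx)

omit [Fintype K] in
theorem normLift_ne_one [Finite F] [Finite K] {χ : MulChar F R} (hχ : χ ≠ 1) :
    normLift F K R χ ≠ 1 := by
  obtain ⟨u, hu⟩ := MulChar.ne_one_iff.1 hχ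
  obtain ⟨v, rfl⟩ := FiniteField.unitsMap_norm_surjective F K u
  refine MulChar.ne_one_iff.2 ⟨v, ?_⟩
  rwa [normLift_apply]

theorem gaussSum_normLift [Fintype F] [IsDomain R] {ψ' : AddChar K R} (hψ : ψ ≠ 1)
    (hψ' : ∀ x, ψ' x = ψ (Algebra.trace F K x)) :
    gaussSum (normLift F K R χ) ψ' =
      (-1) ^ (Module.finrank F K - 1) * gaussSum χ ψ ^ Module.finrank F K := by
  simp only [gaussSum, normLift_apply, hψ']
  exact sum_mulChar_norm_mul_addChar_trace χ hψ

end HasseDavenport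

section MellinTransform

theorem mulChar_zpow_apply {K R : Type*} [Field K] [CommRing R] (χ : MulChar K R) {d : ℤ}
    (hd0 : d ≠ 0) (x : K) : (χ ^ d) x = χ (x ^ d) := by
  rcases eq_or_ne x 0 with rfl | hx
  · rw [zero_zpow d hd0, MulChar.map_zero, MulChar.map_zero]
  · rw [← Units.val_mk0 hx, MulChar.zpow_apply_coe, Units.val_zpow_eq_zpow_val]

theorem mulChar_zpow_injective {K R : Type*} [Field K] [Finite K] [CommRing R] {d : ℤ}
    (hd : Function.Injective fun x : K => x ^ d) :
    Function.Injective fun χ : MulChar K R => χ ^ d := by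
  intro χ χ' h
  ext u
  obtain ⟨x, hx⟩ := Finite.surjective_of_injective hd u
  have hd0 := ne_zero_of_zpow_injective hd
  simpa only [← hx, ← mulChar_zpow_apply _ hd0] using DFunLike.congr_fun h x

variable {K R : Type*} [Field K] [Fintype K] [CommRing R] [IsDomain R] {ψ : AddChar K R} {d : ℤ}

theorem sum_one_mul_binomialSum (hψ : ψ ≠ 1) (hd : Function.Injective fun x : K => x ^ d) :
    ∑ a : K, (1 : MulChar K R) a * binomialSum ψ d a = Fintype.card K := by
  rw [← sum_binomialSum hψ (ne_zero_of_zpow_injective hd)]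
  refine Finset.sum_congr rfl fun a _ => ?_
  rcases eq_or_ne a 0 with rfl | ha
  · rw [binomialSum_zero hψ hd, mul_zero]
  · rw [MulChar.one_apply ha.isUnit, one_mul]

theorem sum_zpow_mul_binomialSum (ψ : AddChar K R) (hd : Function.Injective fun x : K => x ^ d)
    {χ : MulChar K R} (hχ : χ ^ d ≠ 1) :
    ∑ a : K, (χ ^ d) a * binomialSum ψ d a = gaussSum (χ ^ d) ψ * gaussSum χ⁻¹ ψ := by
  have hd0 := ne_zero_of_zpow_injective hd
  have hinner (x : K) : ∑ a : K, (χ ^ d) a * ψ (x ^ d + a * x) =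
      gaussSum (χ ^ d) ψ * (χ⁻¹ (x ^ d) * ψ (x ^ d)) := by
    rcases eq_or_ne x 0 with rfl | hx
    · simp [zero_zpow d hd0, MulChar.map_zero, MulChar.sum_eq_zero_of_ne_one hχ]
    · rw [gaussSum, Finset.sum_mul]
      refine Fintype.sum_bijective _ (mulRight_bijective₀ x hx) _ _ fun a => ?_
      have hcancel : (χ ^ d) x * χ⁻¹ (x ^ d) = 1 := by
        rw [mulChar_zpow_apply χ hd0, MulChar.inv_apply', ← map_mul,
          mul_inv_cancel₀ (zpow_ne_zero d hx), map_one]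
      rw [AddChar.map_add_eq_mul, map_mul (χ ^ d)]
      linear_combination (-(χ ^ d) a * ψ (x ^ d) * ψ (a * x)) * hcancel
  simp only [binomialSum, Finset.mul_sum]
  rw [Finset.sum_comm]
  simp only [hinner, ← Finset.mul_sum]
  rw [gaussSum.eq_1 χ⁻¹]
  exact congrArg _ (Fintype.sum_bijective _ (Finite.injective_iff_bijective.1 hd) _ _ fun _ => rfl)

theorem sum_normLift_mul_binomialSum {E : Type*} [Field E] [Fintype E] [Algebra E K]
    {ψE : AddChar E R} (hψE : ψE ≠ 1) (hψ : ψ ≠ 1) (htrace : ∀ x, ψ x = ψE (Algebra.trace E K x))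
    (hd : Function.Injective fun x : K => x ^ d) (χ : MulChar E R) :
    ∑ a : K, normLift E K R χ a * binomialSum ψ d a =
      (∑ a : E, χ a * binomialSum ψE d a) ^ Module.finrank E K := by
  have hdE : Function.Injective fun x : E => x ^ d := zpow_injective_of_algebra hd
  rcases eq_or_ne χ 1 with rfl | hχ
  · rw [map_one, sum_one_mul_binomialSum hψ hd, sum_one_mul_binomialSum hψE hdE,
      Module.card_eq_pow_finrank (K := E) (V := K), Nat.cast_pow]
  · obtain ⟨θ, rfl : θ ^ d = χ⟩ := Finite.surjective_of_injective (mulChar_zpow_injective hdE) χ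
    have hχK := normLift_ne_one (K := K) hχ
    rw [map_zpow] at hχK ⊢
    rw [sum_zpow_mul_binomialSum ψ hd hχK, sum_zpow_mul_binomialSum ψE hdE hχ, ← map_zpow,
      ← map_inv, gaussSum_normLift _ hψE htrace, gaussSum_normLift _ hψE htrace,
      mul_mul_mul_comm, ← mul_pow, ← mul_pow, neg_one_mul, neg_neg, one_pow, one_mul]

end MellinTransform

section DivisibilityDescent

theorem isIntegral_mulChar_apply {E R : Type*} [Field E] [Finite E] [CommRing R] (χ : MulChar E R)
    (a : E) : IsIntegral ℤ (χ a) := by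
  have := Fintype.ofFinite E
  rcases eq_or_ne a 0 with rfl | ha
  · rw [MulChar.map_zero]
    exact isIntegral_zero
  · refine IsIntegral.of_pow (Nat.sub_pos_of_lt (Fintype.one_lt_card (α := E))) ?_
    rw [← map_pow, FiniteField.pow_card_sub_one_eq_one a ha, map_one]
    exact isIntegral_one

variable {E C : Type*} [Field E] [Fintype E] [Field C] [IsAlgClosed C] [CharZero C]

theorem sum_mulChar_inv_mul [Fintype (MulChar E C)] {a : E} (ha : a ≠ 0) (b : E) :
    ∑ χ : MulChar E C, χ a⁻¹ * χ b = if b = a then (Fintype.card E : C) - 1 else 0 := by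
  simp only [← map_mul]
  split_ifs with hb
  · have hcard : Fintype.card (MulChar E C) = Fintype.card E - 1 := by
      rw [← Nat.card_eq_fintype_card, MulChar.card_eq_card_units_of_hasEnoughRootsOfUnity,
        Nat.card_eq_fintype_card, Fintype.card_units]
    simp only [hb, inv_mul_cancel₀ ha, map_one, Finset.sum_const, Finset.card_univ, nsmul_eq_mul,
      mul_one, hcard, Nat.cast_pred Fintype.card_pos]
  · obtain ⟨θ, hθ⟩ := MulChar.exists_apply_ne_one_of_hasEnoughRootsOfUnity E C
      (mt (inv_mul_eq_one₀ ha).1 (Ne.symm hb))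
    refine eq_zero_of_mul_eq_self_left hθ ?_
    simp only [Finset.mul_sum, ← MulChar.mul_apply]
    exact Fintype.sum_bijective _ (Group.mulLeft_bijective θ) _ _ fun _ => rfl

theorem isIntegral_binomialSum_pow_div {K : Type*} [Field K] [Fintype K] [Algebra E K]
    {ψE : AddChar E C} {ψ : AddChar K C} (hψE : ψE ≠ 1) (hψ : ψ ≠ 1)
    (htrace : ∀ x, ψ x = ψE (Algebra.trace E K x)) {d : ℤ}
    (hd : Function.Injective fun x : K => x ^ d) {P : ℕ} (hP : P ≠ 0)
    (hdvd : ∀ a : K, ∃ w : ℤ, binomialSum ψ d a = P * w) {a : E} (ha : a ≠ 0) :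
    IsIntegral ℤ
      ((((Fintype.card E : C) - 1) * binomialSum ψE d a) ^ Module.finrank E K / P) := by
  have := Fintype.ofFinite (MulChar E C)
  obtain ⟨ρ, hρ⟩ := IsAlgClosed.exists_pow_nat_eq (P : C) (Module.finrank_pos (R := E) (M := K))
  have htransform (χ : MulChar E C) : IsIntegral ℤ ((∑ b : E, χ b * binomialSum ψE d b) / ρ) := by
    refine IsIntegral.of_pow (Module.finrank_pos (R := E) (M := K)) ?_
    rw [div_pow, hρ, ← sum_normLift_mul_binomialSum hψE hψ htrace hd, Finset.sum_div]
    refine IsIntegral.sum _ fun b _ => ?_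
    obtain ⟨w, hw⟩ := hdvd b
    rw [hw, mul_left_comm, mul_div_cancel_left₀ _ (Nat.cast_ne_zero.2 hP)]
    exact (isIntegral_mulChar_apply _ b).mul (isIntegral_algebraMap (x := w))
  have hinversion : ((Fintype.card E : C) - 1) * binomialSum ψE d a / ρ =
      ∑ χ : MulChar E C, χ a⁻¹ * ((∑ b : E, χ b * binomialSum ψE d b) / ρ) := by
    simp only [← mul_div_assoc, ← Finset.sum_div, Finset.mul_sum, ← mul_assoc]
    rw [Finset.sum_comm]
    simp only [← Finset.sum_mul, sum_mulChar_inv_mul ha, ite_mul, zero_mul, Finset.sum_ite_eq',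
      Finset.mem_univ, if_true]
  rw [← hρ, ← div_pow, hinversion]
  exact (IsIntegral.sum _ fun χ _ => (isIntegral_mulChar_apply χ _).mul (htransform χ)).pow _

end DivisibilityDescent

section TraceCharacter

variable (p : ℕ) [Fact p.Prime] (K : Type*) [Field K] [Algebra (ZMod p) K]

/-- The canonical additive character of `K`, bundled as a homomorphism: the standard character of
the prime field composed with the absolute trace. -/
noncomputable def traceAddChar : AddChar K ℂ :=
  ZMod.stdAddChar.compAddMonoidHom (Algebra.trace (ZMod p) K).toAddMonoidHom

variable {K}

theorem traceAddChar_apply (x : K) :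
    traceAddChar p K x = ZMod.stdAddChar (Algebra.trace (ZMod p) K x) :=
  rfl

theorem weilSum_eq_binomialSum {K : Type} [Field K] [Fintype K] [Algebra (ZMod p) K] (d : ℤ)
    (a : K) : weilSum p K d a = binomialSum (traceAddChar p K) d a := by
  simp only [weilSum, canonicalAddChar, binomialSum, traceAddChar_apply, ZMod.stdAddChar_apply,
    ZMod.toCircle_apply]

theorem traceAddChar_eq_one_iff {x : K} :
    traceAddChar p K x = 1 ↔ Algebra.trace (ZMod p) K x = 0 := by
  rw [traceAddChar_apply, ← AddChar.map_zero_eq_one (ZMod.stdAddChar (N := p)),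
    ZMod.injective_stdAddChar.eq_iff]

theorem traceAddChar_ne_one [Finite K] : traceAddChar p K ≠ 1 := by
  obtain ⟨x, hx⟩ := Algebra.trace_surjective (ZMod p) K 1
  refine AddChar.ne_one_iff.2 ⟨x, fun h => ?_⟩
  exact one_ne_zero (hx.symm.trans ((traceAddChar_eq_one_iff p).1 h))

theorem traceAddChar_eq_traceAddChar_trace (F : Type*) [Field F] [Algebra (ZMod p) F]
    [Algebra F K] [FiniteDimensional F K] [FiniteDimensional (ZMod p) F] (x : K) :
    traceAddChar p K x = traceAddChar p F (Algebra.trace F K x) := by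
  have : IsScalarTower (ZMod p) F K := IsScalarTower.of_algebraMap_eq' (RingHom.ext_zmod _ _)
  rw [traceAddChar_apply, traceAddChar_apply, Algebra.trace_trace]

theorem traceAddChar_algEquiv (σ : K ≃ₐ[ZMod p] K) (x : K) :
    traceAddChar p K (σ x) = traceAddChar p K x := by
  rw [traceAddChar_apply, traceAddChar_apply, Algebra.trace_eq_of_algEquiv]

theorem traceAddChar_pow_prime (x : K) : traceAddChar p K x ^ p = 1 := by
  have := charP_of_injective_algebraMap (algebraMap (ZMod p) K).injective p
  rw [← AddChar.map_nsmul_eq_pow, nsmul_eq_mul, CharP.cast_eq_zero, zero_mul,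
    AddChar.map_zero_eq_one]

theorem norm_traceAddChar (x : K) : ‖traceAddChar p K x‖ = 1 :=
  Complex.norm_eq_one_of_pow_eq_one (traceAddChar_pow_prime p x) (Fact.out : p.Prime).ne_zero

theorem isIntegral_binomialSum_traceAddChar [Fintype K] (d : ℤ) (a : K) :
    IsIntegral ℤ (binomialSum (traceAddChar p K) d a) :=
  IsIntegral.sum _ fun x _ => IsIntegral.of_pow (Fact.out : p.Prime).pos <| by
    rw [traceAddChar_pow_prime]
    exact isIntegral_one

theorem exists_algEquiv_eq_zpow_of_traceAddChar_eq_one [Finite K] {d : ℤ}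
    (hd : Function.Injective fun x : K => x ^ d) {b : K}
    (hone : ∀ x : K, traceAddChar p K (x ^ d + b * x) = 1) :
    ∃ σ : K ≃ₐ[ZMod p] K, ∀ x : K, x ^ d = σ x := by
  by_contra! hdeg
  let φ : (K ≃ₐ[ZMod p] K) ⊕ (K ≃ₐ[ZMod p] K) → K →* K :=
    Sum.elim (fun σ => (σ : K →* K).comp (zpowGroupHom d)) fun σ => (σ : K →* K)
  have hdistinct (σ τ : K ≃ₐ[ZMod p] K) (h : ∀ x : K, σ (x ^ d) = τ x) : False := by
    obtain ⟨x, hx⟩ := hdeg (τ.trans σ.symm)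
    exact hx (by rw [AlgEquiv.trans_apply, ← h, AlgEquiv.symm_apply_apply])
  have hφ : Function.Injective φ := by
    rintro (σ | σ) (τ | τ) h
    · congr 1
      ext y
      obtain ⟨x, rfl⟩ := Finite.surjective_of_injective hd y
      exact DFunLike.congr_fun h x
    · exact (hdistinct σ τ (DFunLike.congr_fun h)).elim
    · exact (hdistinct τ σ (DFunLike.congr_fun h.symm)).elim
    · congr 1
      ext x
      exact DFunLike.congr_fun h x
  -- The trace of `x ^ d + b * x` vanishes identically: a linear relation between characters.
  have hrelation (x : K) :
      ∑ σ : K ≃ₐ[ZMod p] K, σ (x ^ d) + ∑ σ : K ≃ₐ[ZMod p] K, σ b * σ x = 0 := by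
    simp only [← map_mul, ← Finset.sum_add_distrib, ← map_add]
    rw [← trace_eq_sum_automorphisms, (traceAddChar_eq_one_iff p).1 (hone x), map_zero]
  have hindep := Fintype.linearIndependent_iff.1 ((linearIndependent_monoidHom K K).comp φ hφ)
    (Sum.elim (fun _ => 1) fun σ => σ b) (by ext x; simpa [φ] using hrelation x) (Sum.inl 1)
  exact one_ne_zero hindep

end TraceCharacter

section IntegerValues

theorem exists_int_eq_of_isIntegral {C : Type*} [Field C] [CharZero C] {z : C}
    (hz : IsIntegral ℤ z) {u v : ℤ} (hv : v ≠ 0) (huv : (v : C) * z = u) :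
    ∃ w : ℤ, z = w := by
  have hrat : z = algebraMap ℚ C (u / v) := by
    rw [map_div₀, map_intCast, map_intCast, eq_div_iff (Int.cast_ne_zero.2 hv), mul_comm, huv]
  rw [hrat, isIntegral_algebraMap_iff (algebraMap ℚ C).injective] at hz
  obtain ⟨w, hw⟩ := IsIntegrallyClosed.isIntegral_iff.1 hz
  exact ⟨w, by rw [hrat, ← hw, eq_intCast, map_intCast]⟩

theorem sum_pow_pow_eq_intCast_of_isPrimitiveRoot {R ι : Type*} [CommRing R] [IsDomain R]
    [CharZero R] {ζ : R} {k : ℕ} (hζ : IsPrimitiveRoot ζ k) (hk : 0 < k) {s : Finset ι} {n : ι → ℕ}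
    {w : ℤ} (hw : ∑ i ∈ s, ζ ^ n i = w) {j : ℕ} (hj : j.Coprime k) :
    ∑ i ∈ s, (ζ ^ j) ^ n i = w := by
  let f : Polynomial ℤ := ∑ i ∈ s, Polynomial.X ^ n i - Polynomial.C w
  have hf (z : R) : Polynomial.aeval z f = ∑ i ∈ s, z ^ n i - w := by simp [f]
  have hdvd : minpoly ℤ ζ ∣ f :=
    minpoly.isIntegrallyClosed_dvd (hζ.isIntegral hk) (by rw [hf, hw, sub_self])
  rw [hζ.minpoly_eq_pow_coprime hj] at hdvd
  rw [← sub_eq_zero, ← hf]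
  exact Polynomial.aeval_eq_zero_of_dvd_aeval_eq_zero hdvd (minpoly.aeval ℤ _)

theorem isPrimitiveRoot_stdAddChar_one (p : ℕ) [NeZero p] :
    IsPrimitiveRoot (ZMod.stdAddChar (1 : ZMod p)) p := by
  have hone : ZMod.stdAddChar (1 : ZMod p) = Complex.exp (2 * Real.pi * Complex.I / p) := by
    simpa using ZMod.stdAddChar_coe (N := p) 1
  exact hone ▸ Complex.isPrimitiveRoot_exp p (NeZero.ne p)

variable {p : ℕ} [Fact p.Prime] {K : Type*} [Field K] [Fintype K] [Algebra (ZMod p) K] {d : ℤ}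

-- Multiplication by `j` in the argument is the Galois conjugation `ζ ↦ ζ ^ j` of the values.
theorem binomialSum_mulShift_eq_intCast {a : K} {w : ℤ}
    (hw : binomialSum (traceAddChar p K) d a = w) {j : ZMod p} (hj : j ≠ 0) :
    binomialSum ((traceAddChar p K).mulShift (algebraMap (ZMod p) K j)) d a = w := by
  have hpow (x : K) : traceAddChar p K x =
      ZMod.stdAddChar (1 : ZMod p) ^ (Algebra.trace (ZMod p) K x).val := by
    rw [← AddChar.map_nsmul_eq_pow, nsmul_one, ZMod.natCast_zmod_val, traceAddChar_apply]
  have hshift (x : K) : traceAddChar p K (algebraMap (ZMod p) K j * x) =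
      (ZMod.stdAddChar (1 : ZMod p) ^ j.val) ^ (Algebra.trace (ZMod p) K x).val := by
    rw [pow_right_comm, ← hpow, ← AddChar.map_nsmul_eq_pow, nsmul_eq_mul,
      ← map_natCast (algebraMap (ZMod p) K), ZMod.natCast_zmod_val]
  simp only [binomialSum, hpow] at hw
  simp only [binomialSum, AddChar.mulShift_apply, hshift]
  exact sum_pow_pow_eq_intCast_of_isPrimitiveRoot (isPrimitiveRoot_stdAddChar_one p)
    (Fact.out : p.Prime).pos hw (ZMod.val_coe_unit_coprime (Units.mk0 j hj))

theorem zpow_eq_self_of_forall_binomialSum_int (hd : Function.Injective fun x : K => x ^ d)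
    (hint : ∀ a : K, ∃ w : ℤ, binomialSum (traceAddChar p K) d a = w) (j : ZMod p) :
    j ^ d = j := by
  rcases eq_or_ne j 0 with rfl | hj
  · exact zero_zpow d (ne_zero_of_zpow_injective hd)
  have hshift (a : K) : binomialSum ((traceAddChar p K).mulShift (algebraMap (ZMod p) K j)) d a =
      binomialSum (traceAddChar p K) d a := by
    obtain ⟨w, hw⟩ := hint a
    rw [hw, binomialSum_mulShift_eq_intCast hw hj]
  have hmoment := sum_binomialSum_mulShift_mul_binomialSum (traceAddChar_ne_one p) hd
    (algebraMap (ZMod p) K j)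
  simp only [hshift, ← sq, sum_binomialSum_sq (traceAddChar_ne_one p) hd] at hmoment
  by_contra hne
  rw [if_neg (by rwa [← map_zpow₀, (algebraMap (ZMod p) K).injective.eq_iff])] at hmoment
  exact pow_ne_zero 2 (Nat.cast_ne_zero.2 Fintype.card_ne_zero) hmoment

end IntegerValues

section SubfieldAutomorphism

theorem sum_sum_algebraMap_mul {F E R : Type*} [Field F] [Fintype F] [Field E] [Fintype E]
    [Algebra F E] [CommRing R] (f : E → R) :
    ∑ l : F, ∑ x : E, f (algebraMap F E l * x) =
      ((Fintype.card F : R) - 1) * ∑ x : E, f x + Fintype.card E * f 0 := by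
  have hinner (l : F) : ∑ x : E, f (algebraMap F E l * x) =
      if l = 0 then Fintype.card E * f 0 else ∑ x : E, f x := by
    split_ifs with hl
    · simp [hl]
    · exact Fintype.sum_bijective _
        (mulLeft_bijective₀ _ ((map_ne_zero (algebraMap F E)).2 hl)) _ _ fun x => rfl
  simp only [hinner]
  rw [← Finset.add_sum_erase _ _ (Finset.mem_univ 0), if_pos rfl,
    Finset.sum_congr rfl fun l hl => if_neg (Finset.ne_of_mem_erase hl), Finset.sum_const,
    Finset.card_erase_of_mem (Finset.mem_univ _), Finset.card_univ, nsmul_eq_mul,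
    Nat.cast_pred Fintype.card_pos, add_comm]

variable {p : ℕ} [Fact p.Prime] {F E : Type*} [Field F] [Algebra (ZMod p) F] [Field E]
  [Algebra (ZMod p) E] [Algebra F E] {d : ℤ}

theorem exists_traceAddChar_zpow_add_eq_traceAddChar_mul [Finite E] (hd0 : d ≠ 0)
    {σ : F ≃ₐ[ZMod p] F} (hσ : ∀ l : F, l ^ d = σ l) (a : E) :
    ∃ c : E → F, c 0 = 0 ∧ ∀ (l : F) (x : E),
      traceAddChar p E ((algebraMap F E l * x) ^ d + a * (algebraMap F E l * x)) =
        traceAddChar p F (l * c x) := by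
  have : IsScalarTower (ZMod p) F E := IsScalarTower.of_algebraMap_eq' (RingHom.ext_zmod _ _)
  have : Finite F := Finite.of_injective _ (algebraMap F E).injective
  let τ : E ≃ₐ[ZMod p] E := σ.liftNormal E
  have hτ (l : F) : τ.symm (algebraMap F E l ^ d) = algebraMap F E l := by
    rw [AlgEquiv.symm_apply_eq, AlgEquiv.liftNormal_commutes, ← map_zpow₀, hσ]
  refine ⟨fun x => Algebra.trace F E (τ.symm (x ^ d) + a * x), ?_, fun l x => ?_⟩
  · beta_reduce
    rw [zero_zpow d hd0, map_zero, mul_zero, add_zero, map_zero]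
  rw [AddChar.map_add_eq_mul, ← traceAddChar_algEquiv p τ.symm, ← AddChar.map_add_eq_mul,
    mul_zpow, map_mul, hτ, mul_left_comm, ← mul_add, ← Algebra.smul_def,
    traceAddChar_eq_traceAddChar_trace p F, map_smul, smul_eq_mul]

variable [Fintype F] [Fintype E]

-- Averaging over the dilations by `F` counts the zeros of an `F`-valued function; `0` is one of
-- them, which is the source of the lower bound.
theorem exists_nat_card_sub_one_mul_binomialSum_add_card (hd0 : d ≠ 0) {σ : F ≃ₐ[ZMod p] F}
    (hσ : ∀ l : F, l ^ d = σ l) (a : E) :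
    ∃ z : ℕ, z ≠ 0 ∧
      ((Fintype.card F : ℂ) - 1) * binomialSum (traceAddChar p E) d a + Fintype.card E =
        Fintype.card F * z := by
  obtain ⟨c, hc0, hc⟩ := exists_traceAddChar_zpow_add_eq_traceAddChar_mul hd0 hσ a
  refine ⟨Finset.card {x : E | c x = 0}, Finset.card_ne_zero_of_mem (a := 0) (by simpa), ?_⟩
  have hdilate := sum_sum_algebraMap_mul (F := F) fun x : E => traceAddChar p E (x ^ d + a * x)
  rw [mul_zero, add_zero, zero_zpow d hd0, AddChar.map_zero_eq_one, mul_one] at hdilate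
  rw [binomialSum, ← hdilate, Finset.sum_comm]
  simp only [hc, sum_addChar_mul (traceAddChar_ne_one p)]
  rw [← Finset.sum_filter, Finset.sum_const, nsmul_eq_mul, mul_comm]

theorem exists_int_binomialSum_eq_of_zpow_eq_algEquiv (hd0 : d ≠ 0) {σ : F ≃ₐ[ZMod p] F}
    (hσ : ∀ l : F, l ^ d = σ l) (a : E) :
    ∃ w : ℤ, binomialSum (traceAddChar p E) d a = w ∧
      (Fintype.card F : ℤ) ≤ (Fintype.card F - 1) * w + Fintype.card E := by
  obtain ⟨z, hz0, hz⟩ := exists_nat_card_sub_one_mul_binomialSum_add_card hd0 hσ a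
  have hF : 1 < (Fintype.card F : ℤ) := by exact_mod_cast Fintype.one_lt_card
  obtain ⟨w, hw⟩ := exists_int_eq_of_isIntegral (isIntegral_binomialSum_traceAddChar p d a)
    (u := Fintype.card F * z - Fintype.card E) (v := Fintype.card F - 1) (by lia)
    (by push_cast; linear_combination hz)
  refine ⟨w, hw, ?_⟩
  rw [hw] at hz
  have hz' : (Fintype.card F - 1 : ℤ) * w + Fintype.card E = Fintype.card F * z := by
    exact_mod_cast hz
  rw [hz']
  exact le_mul_of_one_le_right (by lia) (by lia)

end SubfieldAutomorphism

section QuadraticStep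

theorem eq_one_of_norm_le_one_of_card_le_re_sum {ι : Type*} {s : Finset ι} {f : ι → ℂ}
    (hf : ∀ i ∈ s, ‖f i‖ ≤ 1) (hs : (s.card : ℝ) ≤ (∑ i ∈ s, f i).re) {i : ι} (hi : i ∈ s) :
    f i = 1 := by
  have hre (j : ι) (hj : j ∈ s) : (f j).re ≤ 1 := (Complex.re_le_norm _).trans (hf j hj)
  have hsum : ∑ j ∈ s, (f j).re = ∑ _j ∈ s, 1 :=
    (Finset.sum_le_sum hre).antisymm (by simpa using hs)
  have hone : (f i).re = 1 := (Finset.sum_eq_sum_iff_of_le hre).1 hsum i hi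
  have hnorm : (f i).re = ‖f i‖ := (Complex.re_le_norm _).antisymm (hone ▸ hf i hi)
  exact Complex.ext hone (Complex.nonneg_iff.1 (Complex.re_eq_norm.1 hnorm)).2.symm

theorem exists_le_of_sum_sq_eq_mul_sum {ι : Type*} {s : Finset ι} {w : ι → ℕ} {n : ℕ}
    (hpos : 0 < ∑ i ∈ s, w i) (hsq : ∑ i ∈ s, w i ^ 2 = n * ∑ i ∈ s, w i) :
    ∃ i ∈ s, n ≤ w i := by
  by_contra! hlt
  obtain ⟨i, hi, hwi⟩ := Finset.sum_pos_iff.1 hpos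
  refine hsq.not_lt ?_
  rw [Finset.mul_sum]
  simp only [sq]
  exact Finset.sum_lt_sum (fun j hj => Nat.mul_le_mul_right _ (hlt j hj).le)
    ⟨i, hi, Nat.mul_lt_mul_of_pos_right (hlt i hi) hwi⟩

theorem nonneg_of_dvd_pow {w : ℤ} {n r P : ℕ} (hw : -(n : ℤ) ≤ w) (hnP : n ^ r < P)
    (hdvd : (P : ℤ) ∣ w ^ r) : 0 ≤ w := by
  by_contra! hneg
  have hdvd' : P ∣ w.natAbs ^ r := by simpa [Int.natAbs_pow] using Int.natAbs_dvd_natAbs.2 hdvd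
  have hle : w.natAbs ^ r ≤ n ^ r := Nat.pow_le_pow_left (by lia) r
  exact (Nat.le_of_dvd (pow_pos (Int.natAbs_pos.2 hneg.ne) r) hdvd').not_gt (hle.trans_lt hnP)

variable {p : ℕ} [Fact p.Prime] {E : Type*} [Field E] [Fintype E] [Algebra (ZMod p) E] {d : ℤ}

theorem exists_algEquiv_eq_zpow_of_forall_binomialSum_nat
    (hd : Function.Injective fun x : E => x ^ d)
    (hnat : ∀ a : E, ∃ w : ℕ, binomialSum (traceAddChar p E) d a = w) :
    ∃ σ : E ≃ₐ[ZMod p] E, ∀ x : E, x ^ d = σ x := by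
  choose w hw using hnat
  have hψ := traceAddChar_ne_one p (K := E)
  have hsum : ∑ a : E, w a = Fintype.card E := by
    have h := sum_binomialSum hψ (ne_zero_of_zpow_injective hd)
    simp only [hw] at h
    exact_mod_cast h
  have hsq : ∑ a : E, w a ^ 2 = Fintype.card E ^ 2 := by
    have h := sum_binomialSum_sq hψ hd
    simp only [hw] at h
    exact_mod_cast h
  obtain ⟨b, -, hb⟩ := exists_le_of_sum_sq_eq_mul_sum (hsum ▸ Fintype.card_pos)
    (by rw [hsq, hsum, sq])
  refine exists_algEquiv_eq_zpow_of_traceAddChar_eq_one p hd (b := b) fun x => ?_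
  refine eq_one_of_norm_le_one_of_card_le_re_sum (s := Finset.univ)
    (f := fun x : E => traceAddChar p E (x ^ d + b * x))
    (fun x _ => (norm_traceAddChar p _).le) ?_ (Finset.mem_univ x)
  rw [← binomialSum, hw, Complex.natCast_re, Finset.card_univ]
  exact_mod_cast hb

variable {K : Type*} [Field K] [Fintype K] [Algebra (ZMod p) K] [Algebra E K] {P : ℕ}

theorem dvd_pow_of_binomialSum_eq_intCast (hd : Function.Injective fun x : K => x ^ d)
    (hPK : P ∣ Fintype.card K)
    (hdvd : ∀ a : K, ∃ w : ℤ, binomialSum (traceAddChar p K) d a = P * w) {a : E} (ha : a ≠ 0)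
    {w : ℤ} (hw : binomialSum (traceAddChar p E) d a = w) :
    (P : ℤ) ∣ w ^ Module.finrank E K := by
  have hP : P ≠ 0 := ne_zero_of_dvd_ne_zero Fintype.card_ne_zero hPK
  have hPC : (P : ℂ) ≠ 0 := Nat.cast_ne_zero.2 hP
  have hintegral := isIntegral_binomialSum_pow_div (traceAddChar_ne_one p) (traceAddChar_ne_one p)
    (traceAddChar_eq_traceAddChar_trace p E) hd hP hdvd ha
  obtain ⟨y, hy⟩ := exists_int_eq_of_isIntegral hintegral
    (u := ((Fintype.card E - 1) * w) ^ Module.finrank E K) (v := P) (by exact_mod_cast hP)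
    (by rw [hw, Int.cast_natCast, mul_div_cancel₀ _ hPC]; push_cast; rfl)
  rw [hw, div_eq_iff hPC] at hy
  have hmul : ((Fintype.card E - 1 : ℤ) * w) ^ Module.finrank E K = y * P := by exact_mod_cast hy
  have hcoprime : IsCoprime (P : ℤ) ((Fintype.card E - 1 : ℤ) ^ Module.finrank E K) := by
    have hcoprimeE : IsCoprime (Fintype.card E : ℤ) (Fintype.card E - 1) := ⟨1, -1, by ring⟩
    rw [Module.card_eq_pow_finrank (K := E) (V := K)] at hPK
    exact hcoprimeE.pow.of_isCoprime_of_dvd_left (by exact_mod_cast hPK)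
  exact hcoprime.dvd_of_dvd_mul_left (by rw [← mul_pow, hmul]; exact dvd_mul_left _ _)

variable {F : Type*} [Field F] [Algebra (ZMod p) F] [Algebra F E]

theorem exists_nat_binomialSum_eq_of_finrank_eq_two (hd : Function.Injective fun x : K => x ^ d)
    (hPK : P ∣ Fintype.card K) (hKP : Fintype.card K < P ^ 2)
    (hdvd : ∀ a : K, ∃ w : ℤ, binomialSum (traceAddChar p K) d a = P * w)
    (hEF : Module.finrank F E = 2) {σ : F ≃ₐ[ZMod p] F} (hσ : ∀ l : F, l ^ d = σ l) (a : E) :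
    ∃ w : ℕ, binomialSum (traceAddChar p E) d a = w := by
  have : Fintype F := @Fintype.ofFinite _ (Finite.of_injective _ (algebraMap F E).injective)
  have hE : Fintype.card E = Fintype.card F ^ 2 := by
    rw [Module.card_eq_pow_finrank (K := F) (V := E), hEF]
  have hFP : Fintype.card F ^ Module.finrank E K < P := by
    rw [Module.card_eq_pow_finrank (K := E) (V := K), hE, pow_right_comm] at hKP
    exact lt_of_pow_lt_pow_left₀ 2 (Nat.zero_le _) hKP
  rcases eq_or_ne a 0 with rfl | ha
  · exact ⟨0, by
      rw [binomialSum_zero (traceAddChar_ne_one p) (zpow_injective_of_algebra hd), Nat.cast_zero]⟩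
  obtain ⟨w, hw, hlower⟩ :=
    exists_int_binomialSum_eq_of_zpow_eq_algEquiv (ne_zero_of_zpow_injective hd) hσ a
  have hF : 1 < (Fintype.card F : ℤ) := by exact_mod_cast Fintype.one_lt_card
  have hlower' : -(Fintype.card F : ℤ) ≤ w := by
    rw [hE] at hlower
    push_cast at hlower
    nlinarith
  have hnonneg : 0 ≤ w :=
    nonneg_of_dvd_pow hlower' hFP (dvd_pow_of_binomialSum_eq_intCast hd hPK hdvd ha hw)
  exact ⟨w.toNat, by rw [hw, ← Int.cast_natCast, Int.toNat_of_nonneg hnonneg]⟩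

omit [Fintype E] in
theorem exists_algEquiv_eq_zpow_of_finrank_eq_two (hd : Function.Injective fun x : K => x ^ d)
    (hPK : P ∣ Fintype.card K) (hKP : Fintype.card K < P ^ 2)
    (hdvd : ∀ a : K, ∃ w : ℤ, binomialSum (traceAddChar p K) d a = P * w)
    (hEF : Module.finrank F E = 2) (hF : ∃ σ : F ≃ₐ[ZMod p] F, ∀ l : F, l ^ d = σ l) :
    ∃ σ : E ≃ₐ[ZMod p] E, ∀ x : E, x ^ d = σ x := by
  obtain ⟨σ, hσ⟩ := hF
  have : Fintype E := @Fintype.ofFinite _ (Finite.of_injective _ (algebraMap E K).injective)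
  exact exists_algEquiv_eq_zpow_of_forall_binomialSum_nat (zpow_injective_of_algebra hd)
    (exists_nat_binomialSum_eq_of_finrank_eq_two hd hPK hKP hdvd hEF hσ)

end QuadraticStep

section QuadraticTower

variable {p : ℕ} [Fact p.Prime] {d : ℤ}

theorem exists_algEquiv_eq_zpow_of_finrank_eq_one {F : Type*} [Field F] [Algebra (ZMod p) F]
    (hF : Module.finrank (ZMod p) F = 1) (hd : ∀ j : ZMod p, j ^ d = j) :
    ∃ σ : F ≃ₐ[ZMod p] F, ∀ x : F, x ^ d = σ x := by
  refine ⟨AlgEquiv.refl, fun x => ?_⟩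
  obtain ⟨j, rfl⟩ := (Algebra.finrank_eq_one_iff_bijective_algebraMap.1 hF).2 x
  rw [← map_zpow₀, hd, AlgEquiv.coe_refl, id]

theorem exists_algEquiv_eq_zpow_galoisField {K : Type*} [Field K] [Fintype K] [Algebra (ZMod p) K]
    (hd : Function.Injective fun x : K => x ^ d) {P : ℕ} (hPK : P ∣ Fintype.card K)
    (hKP : Fintype.card K < P ^ 2)
    (hdvd : ∀ a : K, ∃ w : ℤ, binomialSum (traceAddChar p K) d a = P * w) {s : ℕ}
    (hs : 2 ^ s ∣ Module.finrank (ZMod p) K) :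
    ∃ σ : GaloisField p (2 ^ s) ≃ₐ[ZMod p] GaloisField p (2 ^ s), ∀ x, x ^ d = σ x := by
  have hfinrank (t : ℕ) : Module.finrank (ZMod p) (GaloisField p (2 ^ t)) = 2 ^ t :=
    GaloisField.finrank p (by positivity)
  induction s with
  | zero =>
    refine exists_algEquiv_eq_zpow_of_finrank_eq_one (by rw [hfinrank, pow_zero])
      (zpow_eq_self_of_forall_binomialSum_int hd fun a => ?_)
    obtain ⟨w, hw⟩ := hdvd a
    exact ⟨P * w, by rw [hw]; push_cast; rfl⟩
  | succ s ih =>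
    let F := GaloisField p (2 ^ s)
    let E := GaloisField p (2 ^ (s + 1))
    obtain ⟨iFE⟩ : Nonempty (F →ₐ[ZMod p] E) := FiniteField.nonempty_algHom_of_finrank_dvd <| by
      rw [hfinrank, hfinrank]
      exact pow_dvd_pow 2 s.le_succ
    obtain ⟨iEK⟩ : Nonempty (E →ₐ[ZMod p] K) :=
      FiniteField.nonempty_algHom_of_finrank_dvd (by rwa [hfinrank])
    let : Algebra F E := iFE.toAlgebra
    let : Algebra E K := iEK.toAlgebra
    have : IsScalarTower (ZMod p) F E := IsScalarTower.of_algebraMap_eq' (RingHom.ext_zmod _ _)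
    have hFE : Module.finrank F E = 2 := by
      have htower := Module.finrank_mul_finrank (ZMod p) F E
      exact Nat.eq_of_mul_eq_mul_left (by positivity)
        (hfinrank s ▸ htower.trans ((hfinrank (s + 1)).trans (pow_succ 2 s)))
    exact exists_algEquiv_eq_zpow_of_finrank_eq_two (K := K) hd hPK hKP hdvd hFE
      (ih ((pow_dvd_pow 2 s.le_succ).trans hs))

end QuadraticTower

section ThreeValued

variable {K C : Type*} [Field K] [Fintype K] {d : ℤ}

theorem one_lt_card_filter_add_one_zpow (hd : Function.Injective fun x : K => x ^ d) :
    1 < Finset.card {u : K | (u + 1) ^ d = u ^ d + 1} := by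
  have hd0 := ne_zero_of_zpow_injective hd
  refine Finset.one_lt_card.2 ⟨0, ?_, -1, ?_, (neg_ne_zero.2 one_ne_zero).symm⟩
  · simp [zero_zpow d hd0]
  · simp [zero_zpow d hd0, neg_zpow_of_zpow_injective hd]

theorem card_le_card_filter_add_one_zpow {F : Type*} [Field F] (i : F →+* K)
    (hF : ∀ x : F, (x + 1) ^ d = x ^ d + 1) :
    Nat.card F ≤ Finset.card {u : K | (u + 1) ^ d = u ^ d + 1} := by
  have : Fintype F := @Fintype.ofFinite _ (Finite.of_injective i i.injective)
  rw [Nat.card_eq_fintype_card, ← Finset.card_univ]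
  refine Finset.card_le_card_of_injOn i (fun x _ => ?_) i.injective.injOn
  simpa using congrArg i (hF x)

variable [Field C] [CharZero C] {ψ : AddChar K C} {A : C}

theorem sq_eq_card_mul_card_of_three_valued (hψ : ψ ≠ 1)
    (hd : Function.Injective fun x : K => x ^ d)
    (hA : ∀ a : K, binomialSum ψ d a = 0 ∨ binomialSum ψ d a = A ∨ binomialSum ψ d a = -A) :
    A ^ 2 = Fintype.card K * Finset.card {u : K | (u + 1) ^ d = u ^ d + 1} := by
  have hcube (a : K) : binomialSum ψ d a ^ 3 = A ^ 2 * binomialSum ψ d a := by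
    rcases hA a with h | h | h <;> rw [h] <;> ring
  have hsum := sum_binomialSum_pow_three hψ hd
  rw [sum_sum_addChar_zpow_add_sub hψ hd, Finset.sum_congr rfl fun a _ => hcube a,
    ← Finset.mul_sum, sum_binomialSum hψ (ne_zero_of_zpow_injective hd), mul_comm] at hsum
  exact mul_left_cancel₀ (Nat.cast_ne_zero.2 Fintype.card_ne_zero) hsum

theorem exists_int_eq_of_three_valued (hψ : ψ ≠ 1) (hd : Function.Injective fun x : K => x ^ d)
    (hA : ∀ a : K, binomialSum ψ d a = 0 ∨ binomialSum ψ d a = A ∨ binomialSum ψ d a = -A) :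
    ∃ α : ℤ, A = α ∧ α ∣ Fintype.card K ∧ ∀ a : K, ∃ w : ℤ, binomialSum ψ d a = α * w := by
  have hmul (a : K) : ∃ w : ℤ, binomialSum ψ d a = A * w := by
    rcases hA a with h | h | h
    · exact ⟨0, by simpa using h⟩
    · exact ⟨1, by simpa using h⟩
    · exact ⟨-1, by simpa using h⟩
  choose w hw using hmul
  have hsum : A * (∑ a : K, w a : ℤ) = (Fintype.card K : ℤ) := by
    rw [Int.cast_natCast, ← sum_binomialSum hψ (ne_zero_of_zpow_injective hd), Int.cast_sum,
      Finset.mul_sum]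
    exact Finset.sum_congr rfl fun a _ => (hw a).symm
  have hintegral : IsIntegral ℤ A := IsIntegral.of_pow two_pos <| by
    rw [sq_eq_card_mul_card_of_three_valued hψ hd hA, ← Nat.cast_mul]
    exact isIntegral_natCast _
  have hne : ∑ a : K, w a ≠ 0 := by
    intro h
    rw [h, Int.cast_zero, mul_zero, eq_comm, Int.cast_natCast] at hsum
    exact Fintype.card_ne_zero (Nat.cast_eq_zero.1 hsum)
  obtain ⟨α, rfl⟩ := exists_int_eq_of_isIntegral hintegral hne ((mul_comm _ _).trans hsum)
  exact ⟨α, rfl, ⟨_, by exact_mod_cast hsum.symm⟩, fun a => ⟨w a, hw a⟩⟩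

theorem exists_dvd_card_lt_sq_of_three_valued (hψ : ψ ≠ 1)
    (hd : Function.Injective fun x : K => x ^ d)
    (hA : ∀ a : K, binomialSum ψ d a = 0 ∨ binomialSum ψ d a = A ∨ binomialSum ψ d a = -A) :
    ∃ P : ℕ, P ∣ Fintype.card K ∧ Fintype.card K < P ^ 2 ∧
      ∀ a : K, ∃ w : ℤ, binomialSum ψ d a = P * w := by
  obtain ⟨α, rfl, hαK, hdvd⟩ := exists_int_eq_of_three_valued hψ hd hA
  refine ⟨α.natAbs, Int.natCast_dvd_natCast.1 (Int.natAbs_dvd.2 hαK), ?_, fun a => ?_⟩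
  · have hsq : α.natAbs ^ 2 =
        Fintype.card K * Finset.card {u : K | (u + 1) ^ d = u ^ d + 1} := by
      zify
      rw [sq_abs]
      exact_mod_cast sq_eq_card_mul_card_of_three_valued hψ hd hA
    rw [hsq]
    exact lt_mul_of_one_lt_right Fintype.card_pos (one_lt_card_filter_add_one_zpow hd)
  · obtain ⟨w, hw⟩ := hdvd a
    obtain ⟨v, hv⟩ := Int.natAbs_dvd.2 (dvd_mul_right α w)
    exact ⟨v, by rw [hw, ← Int.cast_mul, hv, Int.cast_mul, Int.cast_natCast]⟩

theorem pow_two_pow_mul_card_le_norm_sq_of_three_valued {p : ℕ} [Fact p.Prime]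
    [Algebra (ZMod p) K] {A : ℂ} (hd : Function.Injective fun x : K => x ^ d)
    (hA : ∀ a : K, binomialSum (traceAddChar p K) d a = 0 ∨
      binomialSum (traceAddChar p K) d a = A ∨ binomialSum (traceAddChar p K) d a = -A)
    {s : ℕ} (hs : 2 ^ s ∣ Module.finrank (ZMod p) K) :
    (p : ℝ) ^ 2 ^ s * Fintype.card K ≤ ‖A‖ ^ 2 := by
  have hψ := traceAddChar_ne_one p (K := K)
  obtain ⟨P, hPK, hKP, hdvd⟩ := exists_dvd_card_lt_sq_of_three_valued hψ hd hA
  obtain ⟨σ, hσ⟩ := exists_algEquiv_eq_zpow_galoisField hd hPK hKP hdvd hs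
  obtain ⟨i⟩ : Nonempty (GaloisField p (2 ^ s) →ₐ[ZMod p] K) :=
    FiniteField.nonempty_algHom_of_finrank_dvd (by rwa [GaloisField.finrank p (by positivity)])
  have hcard := card_le_card_filter_add_one_zpow (i : GaloisField p (2 ^ s) →+* K) fun x => by
    rw [hσ, hσ, map_add, map_one]
  rw [GaloisField.card p _ (by positivity)] at hcard
  rw [← norm_pow, sq_eq_card_mul_card_of_three_valued hψ hd hA, norm_mul, Complex.norm_natCast,
    Complex.norm_natCast, mul_comm]
  gcongr
  exact_mod_cast hcard

end ThreeValued

theorem stmt5 (p : ℕ) [Fact p.Prime] (K : Type) [Field K] [Fintype K] [CharP K p]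
    [Algebra (ZMod p) K]
    (s : ℕ) (hs : ∃ m : ℕ, Odd m ∧ Module.finrank (ZMod p) K = 2 ^ s * m)
    (d : ℤ) (hd : Int.gcd d ((Fintype.card K : ℤ) - 1) = 1)
    (A : ℂ) (hA : A ≠ 0)
    (hval : weilValues p K d = {0, A, -A}) :
    (p : ℝ) ^ (2 ^ s) * Fintype.card K ≤ ‖A‖ ^ 2 := by
  have hψ := traceAddChar_ne_one p (K := K)
  have hd0 : d ≠ 0 := by
    rintro rfl
    obtain ⟨b, hb, hbA⟩ : A ∈ weilValues p K 0 := by simp [hval]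
    exact hA (by rw [← hbA, weilSum_eq_binomialSum, binomialSum_exponent_zero hψ hb])
  have hinj := zpow_injective_of_gcd_eq_one hd0 hd
  obtain ⟨m, -, hm⟩ := hs
  refine pow_two_pow_mul_card_le_norm_sq_of_three_valued hinj (fun a => ?_) ⟨m, hm⟩
  rcases eq_or_ne a 0 with rfl | ha
  · exact Or.inl (binomialSum_zero hψ hinj)
  · have hmem : weilSum p K d a ∈ weilValues p K d := ⟨a, ha, rfl⟩
    rwa [hval, weilSum_eq_binomialSum] at hmem
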